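/- Let i_n : G_n → G_{n+1} (n ∈ ℕ) be injective open continuous groupoid homomorphisms between étale groupoids with locally compact Hausdorff unit spaces. Then the topological inductive limit G = colim_n G_n, equipped with the pointwise-defined multiplication, is an étale groupoid with locally compact Hausdorff unit space, and the canonical maps ι^n : G_n → G are injective open continuous groupoid homomorphisms. -/

import Mathlib

open Topology

/-- A topological groupoid: a set with a partially defined multiplication
(`D a b` expresses composability), an inversion, satisfying the groupoid
axioms, such that inversion is continuous and multiplication is continuous
on the set of composable pairs. -/
structure TopGroupoid (G : Type*) [TopologicalSpace G] where
  /-- composability -/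
  D : G → G → Prop
  /-- partially defined multiplication (junk values off `D`) -/
  comp : G → G → G
  /-- inversion -/
  inv : G → G
  inv_inv : ∀ g, inv (inv g) = g
  d_inv : ∀ g, D g (inv g)
  d_eq : ∀ a b, D a b ↔ comp (inv a) a = comp b (inv b)
  d_comp_left : ∀ {a b c}, D a b → D b c → D (comp a b) c
  d_comp_right : ∀ {a b c}, D a b → D b c → D a (comp b c)
  assoc : ∀ {a b c}, D a b → D b c → comp (comp a b) c = comp a (comp b c)
  cancel_left : ∀ {g h}, D g h → comp (inv g) (comp g h) = h
  cancel_right : ∀ {g h}, D g h → comp (comp g h) (inv h) = g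
  continuous_inv : Continuous inv
  continuousOn_comp : ContinuousOn (fun p : G × G => comp p.1 p.2) {p | D p.1 p.2}

namespace TopGroupoid

variable {G : Type*} [TopologicalSpace G]

/-- The source map `s(γ) = γ⁻¹γ`. -/
def src (S : TopGroupoid G) (g : G) : G := S.comp (S.inv g) g

/-- The range map `r(γ) = γγ⁻¹`. -/
def rng (S : TopGroupoid G) (g : G) : G := S.comp g (S.inv g)

/-- The unit space `G⁽⁰⁾ = {γ⁻¹γ : γ ∈ G}`. -/
def unitSpace (S : TopGroupoid G) : Set G := Set.range S.src

/-- A groupoid is étale if its range map is a local homeomorphism. -/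
def IsEtale (S : TopGroupoid G) : Prop := IsLocalHomeomorph S.rng

/-- An open bisection: an open set on which both the source and the range map
are injective (hence, in an étale groupoid, restrict to homeomorphisms onto
their open images). -/
def IsOpenBisection (S : TopGroupoid G) (U : Set G) : Prop :=
  IsOpen U ∧ Set.InjOn S.src U ∧ Set.InjOn S.rng U

/-- Pointwise product of subsets: `U·V = {γη : γ ∈ U, η ∈ V, s γ = r η}`. -/
def setMul (S : TopGroupoid G) (U V : Set G) : Set G :=
  {g | ∃ a ∈ U, ∃ b ∈ V, S.D a b ∧ g = S.comp a b}

/-- Pointwise inverse of a subset: `U⁻¹ = {γ⁻¹ : γ ∈ U}`. -/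
def setInv (S : TopGroupoid G) (U : Set G) : Set G := S.inv '' U

end TopGroupoid

/-- An actor `G ↷ H`: a continuous left action of `G` on `H` (with anchor map
`ρ : H → G⁽⁰⁾`) which commutes with the right multiplication of `H` on itself. -/
structure Actor {G : Type*} {H : Type*} [TopologicalSpace G] [TopologicalSpace H]
    (S : TopGroupoid G) (T : TopGroupoid H) where
  /-- the anchor map -/
  rho : H → G
  /-- the action multiplication, partially defined (junk off `s γ = ρ x`) -/
  act : G → H → H
  rho_mem : ∀ x, rho x ∈ S.unitSpace
  continuous_rho : Continuous rho
  continuousOn_act :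
    ContinuousOn (fun p : G × H => act p.1 p.2) {p | S.src p.1 = rho p.2}
  rho_act : ∀ {γ x}, S.src γ = rho x → rho (act γ x) = S.rng γ
  act_assoc : ∀ {γ₁ γ₂ x}, S.D γ₁ γ₂ → S.src γ₂ = rho x →
      act γ₁ (act γ₂ x) = act (S.comp γ₁ γ₂) x
  act_unit : ∀ x, act (rho x) x = x
  rho_comp : ∀ {x y}, T.D x y → rho (T.comp x y) = rho x
  src_act : ∀ {γ x}, S.src γ = rho x → T.src (act γ x) = T.src x
  act_right : ∀ {γ x y}, S.src γ = rho x → T.D x y →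
      act γ (T.comp x y) = T.comp (act γ x) y

namespace Actor

variable {G H : Type*} [TopologicalSpace G] [TopologicalSpace H]
variable {S : TopGroupoid G} {T : TopGroupoid H}

/-- An actor is free if the only arrows fixing a unit are units. -/
def Free (A : Actor S T) : Prop :=
  ∀ t ∈ T.unitSpace, ∀ γ : G, S.src γ = A.rho t → A.act γ t = t → γ ∈ S.unitSpace

/-- An actor is proper if the anchor map restricted to the unit space of `H`
is a proper map. -/
def Proper (A : Actor S T) : Prop := IsProperMap (T.unitSpace.restrict A.rho)

/-- `U·V = {γ·x : γ ∈ U, x ∈ V, s γ = ρ x}`. -/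
def actSet (A : Actor S T) (U : Set G) (V : Set H) : Set H :=
  {y | ∃ γ ∈ U, ∃ x ∈ V, S.src γ = A.rho x ∧ y = A.act γ x}

end Actor

/-- The relation generating the inductive limit identifications:
each element is identified with its image at the next stage. -/
def colimRel {G : ℕ → Type*} (i : ∀ n, G n → G (n + 1)) :
    (Σ n, G n) → (Σ n, G n) → Prop :=
  fun x y => (⟨x.1 + 1, i x.1 x.2⟩ : Σ n, G n) = y

/-- The topological inductive limit of the system `(G n, i n)`, with the
quotient topology of the disjoint union. -/
abbrev Colim {G : ℕ → Type*} [∀ n, TopologicalSpace (G n)]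
    (i : ∀ n, G n → G (n + 1)) : Type _ :=
  Quot (colimRel i)

/-- The canonical map `G n → colim G`. -/
def colimMk {G : ℕ → Type*} [∀ n, TopologicalSpace (G n)]
    (i : ∀ n, G n → G (n + 1)) (n : ℕ) (a : G n) : Colim i :=
  Quot.mk (colimRel i) ⟨n, a⟩

namespace TopGroupoid

variable {G H K : Type*} [TopologicalSpace G] [TopologicalSpace H] [TopologicalSpace K]

theorem src_src (S : TopGroupoid G) (g : G) : S.src (S.src g) = S.src g := by
  have h₁ : S.D (S.inv g) g := by simpa only [S.inv_inv] using S.d_inv (S.inv g)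
  have h₂ := (S.d_eq _ _).1 (S.d_comp_left h₁ (S.d_inv g))
  rwa [S.inv_inv] at h₂

theorem mem_unitSpace_iff (S : TopGroupoid G) {u : G} : u ∈ S.unitSpace ↔ S.src u = u :=
  ⟨by rintro ⟨g, rfl⟩; exact S.src_src g, fun h => ⟨u, h⟩⟩

/-- An injective open continuous groupoid homomorphism, reflecting composability. -/
structure IsOpenHom (S : TopGroupoid G) (T : TopGroupoid H) (f : G → H) : Prop where
  injective : Function.Injective f
  continuous : Continuous f
  isOpenMap : IsOpenMap f
  d_iff : ∀ a b, S.D a b ↔ T.D (f a) (f b)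
  map_comp : ∀ a b, S.D a b → f (S.comp a b) = T.comp (f a) (f b)
  map_inv : ∀ a, f (S.inv a) = T.inv (f a)

namespace IsOpenHom

variable {S : TopGroupoid G} {T : TopGroupoid H} {R : TopGroupoid K} {f : G → H} {g : H → K}

theorem id (S : TopGroupoid G) : S.IsOpenHom S id :=
  ⟨Function.injective_id, continuous_id, IsOpenMap.id, fun _ _ => Iff.rfl, fun _ _ _ => rfl,
    fun _ => rfl⟩

theorem comp (hg : T.IsOpenHom R g) (hf : S.IsOpenHom T f) : S.IsOpenHom R (g ∘ f) where
  injective := hg.injective.comp hf.injective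
  continuous := hg.continuous.comp hf.continuous
  isOpenMap := hg.isOpenMap.comp hf.isOpenMap
  d_iff a b := (hf.d_iff a b).trans (hg.d_iff _ _)
  map_comp a b h := by
    simp only [Function.comp_apply, hf.map_comp a b h, hg.map_comp _ _ ((hf.d_iff a b).1 h)]
  map_inv a := by simp only [Function.comp_apply, hf.map_inv, hg.map_inv]

theorem isOpenEmbedding (hf : S.IsOpenHom T f) : IsOpenEmbedding f :=
  .of_continuous_injective_isOpenMap hf.continuous hf.injective hf.isOpenMap

theorem map_src (hf : S.IsOpenHom T f) (a : G) : f (S.src a) = T.src (f a) := by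
  have h : S.D (S.inv a) a := by simpa only [S.inv_inv] using S.d_inv (S.inv a)
  rw [src, src, hf.map_comp _ _ h, hf.map_inv]

theorem map_rng (hf : S.IsOpenHom T f) (a : G) : f (S.rng a) = T.rng (f a) := by
  rw [rng, rng, hf.map_comp _ _ (S.d_inv a), hf.map_inv]

theorem map_mem_unitSpace_iff (hf : S.IsOpenHom T f) {a : G} :
    f a ∈ T.unitSpace ↔ a ∈ S.unitSpace := by
  rw [mem_unitSpace_iff, mem_unitSpace_iff, ← hf.map_src, hf.injective.eq_iff]

/-- The map on unit spaces induced by an open homomorphism. -/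
def mapUnits (hf : S.IsOpenHom T f) (u : S.unitSpace) : T.unitSpace :=
  ⟨f u, hf.map_mem_unitSpace_iff.2 u.2⟩

theorem isOpenEmbedding_mapUnits (hf : S.IsOpenHom T f) : IsOpenEmbedding hf.mapUnits := by
  refine ⟨(IsEmbedding.of_comp_iff (g := Subtype.val) .subtypeVal).1
    (hf.isOpenEmbedding.isEmbedding.comp .subtypeVal), ?_⟩
  have h : Set.range hf.mapUnits = Subtype.val ⁻¹' Set.range f := by
    ext ⟨u, hu⟩
    constructor
    · rintro ⟨a, ha⟩
      exact ⟨a, congrArg Subtype.val ha⟩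
    · rintro ⟨a, rfl⟩
      exact ⟨⟨a, hf.map_mem_unitSpace_iff.1 hu⟩, rfl⟩
  rw [h]
  exact hf.isOpenMap.isOpen_range.preimage continuous_subtype_val

end IsOpenHom

end TopGroupoid

section Colim

open TopGroupoid

variable {G : ℕ → Type*} [∀ n, TopologicalSpace (G n)] {S : ∀ n, TopGroupoid (G n)}
  {i : ∀ n, G n → G (n + 1)}

theorem colimMk_succ (i : ∀ n, G n → G (n + 1)) (n : ℕ) (a : G n) :
    colimMk i (n + 1) (i n a) = colimMk i n a :=
  (Quot.sound (r := colimRel i) (a := ⟨n, a⟩) rfl).symm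

theorem exists_transition (hi : ∀ n, (S n).IsOpenHom (S (n + 1)) (i n)) {n m : ℕ} (hnm : n ≤ m) :
    ∃ f : G n → G m, (S n).IsOpenHom (S m) f ∧ ∀ a, colimMk i m (f a) = colimMk i n a := by
  induction m, hnm using Nat.le_induction with
  | base => exact ⟨id, .id _, fun _ => rfl⟩
  | succ m _ ih =>
    obtain ⟨f, hf, hfa⟩ := ih
    exact ⟨i m ∘ f, (hi m).comp hf, fun a => (colimMk_succ i m _).trans (hfa a)⟩

theorem colimMk_injective (hi : ∀ n, Function.Injective (i n)) (n : ℕ) :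
    Function.Injective (colimMk i n) := by
  let F : (Σ n, G n) → (Σ n, G n) := fun x => ⟨x.1 + 1, i x.1 x.2⟩
  have hF : Function.Injective F := by
    rintro ⟨n, a⟩ ⟨m, b⟩ h
    obtain rfl : n = m := by simpa [F] using congrArg Sigma.fst h
    simpa [F, (hi n).eq_iff] using h
  have hfst : ∀ k x, (F^[k] x).1 = x.1 + k := by
    intro k
    induction k with
    | zero => simp
    | succ k ih =>
      intro x
      rw [Function.iterate_succ_apply, ih]
      simp only [F]
      omega
  have key : ∀ x y, Relation.EqvGen (colimRel i) x y → ∃ k l, F^[k] x = F^[l] y := by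
    intro x y h
    induction h with
    | rel x y h => exact ⟨1, 0, h⟩
    | refl x => exact ⟨0, 0, rfl⟩
    | symm x y _ ih =>
      obtain ⟨k, l, h⟩ := ih
      exact ⟨l, k, h.symm⟩
    | trans x y z _ _ ih₁ ih₂ =>
      obtain ⟨k, l, h⟩ := ih₁
      obtain ⟨k', l', h'⟩ := ih₂
      refine ⟨k' + k, l + l', ?_⟩
      rw [Function.iterate_add_apply, h, Function.iterate_add_apply, ← h',
        ← Function.iterate_add_apply, ← Function.iterate_add_apply, add_comm]
  intro a b h
  obtain ⟨k, l, hkl⟩ := key _ _ (Quot.eqvGen_exact h)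
  obtain rfl : k = l := by
    have := congrArg Sigma.fst hkl
    rw [hfst, hfst] at this
    simpa using this
  simpa using hF.iterate k hkl

theorem continuous_colimMk (i : ∀ n, G n → G (n + 1)) (n : ℕ) : Continuous (colimMk i n) :=
  continuous_quot_mk.comp continuous_sigmaMk

theorem isOpenMap_colimMk (hi : ∀ n, (S n).IsOpenHom (S (n + 1)) (i n)) (n : ℕ) :
    IsOpenMap (colimMk i n) := by
  have hinj := colimMk_injective fun n => (hi n).injective
  intro U hU
  rw [← isQuotientMap_quot_mk.isOpen_preimage, isOpen_sigma_iff]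
  intro m
  change IsOpen (colimMk i m ⁻¹' (colimMk i n '' U))
  rcases le_total m n with hmn | hmn
  · obtain ⟨f, hf, hfa⟩ := exists_transition hi hmn
    have h : colimMk i m ⁻¹' (colimMk i n '' U) = f ⁻¹' U := by
      ext a
      rw [Set.mem_preimage, ← hfa, (hinj n).mem_set_image, Set.mem_preimage]
    rw [h]
    exact hU.preimage hf.continuous
  · obtain ⟨f, hf, hfa⟩ := exists_transition hi hmn
    have h : colimMk i n '' U = colimMk i m '' (f '' U) := by
      simp only [Set.image_image, hfa]
    rw [h, Set.preimage_image_eq _ (hinj m)]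
    exact hf.isOpenMap U hU

theorem exists_colimMk_eq (i : ∀ n, G n → G (n + 1)) (x : Colim i) :
    ∃ N, ∀ n ≥ N, ∃ a, colimMk i n a = x := by
  obtain ⟨⟨N, a⟩, rfl⟩ := Quot.exists_rep x
  refine ⟨N, fun n hn => ?_⟩
  induction n, hn using Nat.le_induction with
  | base => exact ⟨a, rfl⟩
  | succ n _ ih =>
    obtain ⟨b, hb⟩ := ih
    exact ⟨i n b, (colimMk_succ i n b).trans hb⟩

theorem exists_colimMk_eq₃ (x y z : Colim i) :
    ∃ n a b c, colimMk i n a = x ∧ colimMk i n b = y ∧ colimMk i n c = z := by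
  obtain ⟨k, hk⟩ := exists_colimMk_eq i x
  obtain ⟨l, hl⟩ := exists_colimMk_eq i y
  obtain ⟨m, hm⟩ := exists_colimMk_eq i z
  obtain ⟨a, ha⟩ := hk (k + l + m) (by omega)
  obtain ⟨b, hb⟩ := hl (k + l + m) (by omega)
  obtain ⟨c, hc⟩ := hm (k + l + m) (by omega)
  exact ⟨_, a, b, c, ha, hb, hc⟩

theorem exists_colimMk_eq₂ (x y : Colim i) :
    ∃ n a b, colimMk i n a = x ∧ colimMk i n b = y := by
  obtain ⟨n, a, b, _, ha, hb, _⟩ := exists_colimMk_eq₃ x y y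
  exact ⟨n, a, b, ha, hb⟩

/-- Composability in the inductive limit: representatives at some stage are composable. -/
def ColimD (S : ∀ n, TopGroupoid (G n)) (i : ∀ n, G n → G (n + 1)) (x y : Colim i) : Prop :=
  ∃ p : Σ n, G n × G n,
    colimMk i p.1 p.2.1 = x ∧ colimMk i p.1 p.2.2 = y ∧ (S p.1).D p.2.1 p.2.2

open Classical in
/-- Multiplication in the inductive limit, computed on composable representatives. -/
noncomputable def colimComp (S : ∀ n, TopGroupoid (G n)) (i : ∀ n, G n → G (n + 1))
    (x y : Colim i) : Colim i :=
  if h : ColimD S i x y then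
    colimMk i h.choose.1 ((S h.choose.1).comp h.choose.2.1 h.choose.2.2)
  else x

/-- Inversion in the inductive limit. -/
def colimInv (hinv : ∀ n a, i n ((S n).inv a) = (S (n + 1)).inv (i n a)) : Colim i → Colim i :=
  Quot.lift (fun x => colimMk i x.1 ((S x.1).inv x.2)) <| by
    rintro ⟨n, a⟩ _ rfl
    simp only [← hinv, colimMk_succ]

theorem exists_common_stage (hi : ∀ n, (S n).IsOpenHom (S (n + 1)) (i n)) (n m : ℕ) :
    ∃ (k : ℕ) (f : G n → G k) (g : G m → G k), (S n).IsOpenHom (S k) f ∧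
      (S m).IsOpenHom (S k) g ∧ (∀ a, colimMk i k (f a) = colimMk i n a) ∧
      ∀ a, colimMk i k (g a) = colimMk i m a := by
  obtain ⟨f, hf, hfa⟩ := exists_transition hi (Nat.le_add_right n m)
  obtain ⟨g, hg, hga⟩ := exists_transition hi (Nat.le_add_left m n)
  exact ⟨_, f, g, hf, hg, hfa, hga⟩

theorem colimMk_d_comp (hi : ∀ n, (S n).IsOpenHom (S (n + 1)) (i n)) {n m : ℕ} {a b : G n}
    {a' b' : G m} (ha : colimMk i m a' = colimMk i n a) (hb : colimMk i m b' = colimMk i n b)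
    (h : (S m).D a' b') :
    (S n).D a b ∧ colimMk i m ((S m).comp a' b') = colimMk i n ((S n).comp a b) := by
  obtain ⟨k, f, g, hf, hg, hfa, hga⟩ := exists_common_stage hi n m
  have hinj := colimMk_injective (fun n => (hi n).injective) k
  have ha' : g a' = f a := hinj (by rw [hfa, hga, ha])
  have hb' : g b' = f b := hinj (by rw [hfa, hga, hb])
  have h' : (S n).D a b := by rwa [hf.d_iff, ← ha', ← hb', ← hg.d_iff]
  refine ⟨h', ?_⟩
  rw [← hga, ← hfa, hg.map_comp _ _ h, hf.map_comp _ _ h', ha', hb']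

theorem colimD_mk (hi : ∀ n, (S n).IsOpenHom (S (n + 1)) (i n)) {n : ℕ} {a b : G n} :
    ColimD S i (colimMk i n a) (colimMk i n b) ↔ (S n).D a b :=
  ⟨fun ⟨_, ha, hb, h⟩ => (colimMk_d_comp hi ha hb h).1, fun h => ⟨⟨n, a, b⟩, rfl, rfl, h⟩⟩

theorem colimComp_mk (hi : ∀ n, (S n).IsOpenHom (S (n + 1)) (i n)) {n : ℕ} {a b : G n}
    (h : (S n).D a b) :
    colimComp S i (colimMk i n a) (colimMk i n b) = colimMk i n ((S n).comp a b) := by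
  have hD := (colimD_mk hi).2 h
  rw [colimComp, dif_pos hD]
  obtain ⟨ha, hb, h'⟩ := hD.choose_spec
  exact (colimMk_d_comp hi ha hb h').2

theorem isOpenEmbedding_colimMk (hi : ∀ n, (S n).IsOpenHom (S (n + 1)) (i n)) (n : ℕ) :
    IsOpenEmbedding (colimMk i n) :=
  .of_continuous_injective_isOpenMap (continuous_colimMk i n)
    (colimMk_injective (fun n => (hi n).injective) n) (isOpenMap_colimMk hi n)

/-- The inductive limit of a sequence of open embeddings of topological groupoids. -/
noncomputable def colimGroupoid (hi : ∀ n, (S n).IsOpenHom (S (n + 1)) (i n)) :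
    TopGroupoid (Colim i) where
  D := ColimD S i
  comp := colimComp S i
  inv := colimInv fun n => (hi n).map_inv
  inv_inv := by
    rintro ⟨n, a⟩
    exact congrArg (colimMk i n) ((S n).inv_inv a)
  d_inv := by
    rintro ⟨n, a⟩
    exact (colimD_mk hi).2 ((S n).d_inv a)
  d_eq := by
    intro x y
    obtain ⟨n, a, b, rfl, rfl⟩ := exists_colimMk_eq₂ x y
    have h : (S n).D ((S n).inv a) a := by
      simpa only [(S n).inv_inv] using (S n).d_inv ((S n).inv a)
    change _ ↔ colimComp S i (colimMk i n ((S n).inv a)) (colimMk i n a) =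
      colimComp S i (colimMk i n b) (colimMk i n ((S n).inv b))
    rw [colimD_mk hi, colimComp_mk hi h, colimComp_mk hi ((S n).d_inv b),
      (colimMk_injective (fun n => (hi n).injective) n).eq_iff, (S n).d_eq]
  d_comp_left := by
    intro x y z
    obtain ⟨n, a, b, c, rfl, rfl, rfl⟩ := exists_colimMk_eq₃ x y z
    rw [colimD_mk hi, colimD_mk hi]
    intro h₁ h₂
    rw [colimComp_mk hi h₁, colimD_mk hi]
    exact (S n).d_comp_left h₁ h₂
  d_comp_right := by
    intro x y z
    obtain ⟨n, a, b, c, rfl, rfl, rfl⟩ := exists_colimMk_eq₃ x y z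
    rw [colimD_mk hi, colimD_mk hi]
    intro h₁ h₂
    rw [colimComp_mk hi h₂, colimD_mk hi]
    exact (S n).d_comp_right h₁ h₂
  assoc := by
    intro x y z
    obtain ⟨n, a, b, c, rfl, rfl, rfl⟩ := exists_colimMk_eq₃ x y z
    rw [colimD_mk hi, colimD_mk hi]
    intro h₁ h₂
    rw [colimComp_mk hi h₁, colimComp_mk hi h₂, colimComp_mk hi ((S n).d_comp_left h₁ h₂),
      colimComp_mk hi ((S n).d_comp_right h₁ h₂), (S n).assoc h₁ h₂]
  cancel_left := by
    intro x y
    obtain ⟨n, a, b, rfl, rfl⟩ := exists_colimMk_eq₂ x y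
    rw [colimD_mk hi]
    intro h
    have ha : (S n).D ((S n).inv a) a := by
      simpa only [(S n).inv_inv] using (S n).d_inv ((S n).inv a)
    change colimComp S i (colimMk i n ((S n).inv a)) _ = _
    rw [colimComp_mk hi h, colimComp_mk hi ((S n).d_comp_right ha h), (S n).cancel_left h]
  cancel_right := by
    intro x y
    obtain ⟨n, a, b, rfl, rfl⟩ := exists_colimMk_eq₂ x y
    rw [colimD_mk hi]
    intro h
    change colimComp S i _ (colimMk i n ((S n).inv b)) = _
    rw [colimComp_mk hi h, colimComp_mk hi ((S n).d_comp_left h ((S n).d_inv b)),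
      (S n).cancel_right h]
  continuous_inv := continuous_quot_lift _ <| continuous_sigma fun n =>
    (continuous_colimMk i n).comp (S n).continuous_inv
  continuousOn_comp := by
    rintro ⟨x, y⟩
    obtain ⟨n, a, b, rfl, rfl⟩ := exists_colimMk_eq₂ x y
    intro (h : ColimD S i _ _)
    have he := (isOpenEmbedding_colimMk hi n).prodMap (isOpenEmbedding_colimMk hi n)
    have hpre : Prod.map (colimMk i n) (colimMk i n) ⁻¹' {p | ColimD S i p.1 p.2} =
        {p | (S n).D p.1 p.2} := by
      ext p
      exact colimD_mk hi
    have hmap := he.map_nhdsWithin_preimage_eq {p | ColimD S i p.1 p.2} (a, b)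
    rw [hpre] at hmap
    have hc : ContinuousWithinAt (fun p => colimMk i n ((S n).comp p.1 p.2))
        {p | (S n).D p.1 p.2} (a, b) :=
      (continuous_colimMk i n).continuousAt.comp_continuousWithinAt
        ((S n).continuousOn_comp _ ((colimD_mk hi).1 h))
    change Filter.Tendsto _ (𝓝[_] (Prod.map (colimMk i n) (colimMk i n) (a, b)))
      (𝓝 (colimComp S i (colimMk i n a) (colimMk i n b)))
    rw [← hmap, Filter.tendsto_map'_iff, colimComp_mk hi ((colimD_mk hi).1 h)]
    exact hc.congr' (eventually_nhdsWithin_of_forall fun p hp => (colimComp_mk hi hp).symm)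

theorem isOpenHom_colimMk (hi : ∀ n, (S n).IsOpenHom (S (n + 1)) (i n)) (n : ℕ) :
    (S n).IsOpenHom (colimGroupoid hi) (colimMk i n) where
  injective := (isOpenEmbedding_colimMk hi n).injective
  continuous := continuous_colimMk i n
  isOpenMap := isOpenMap_colimMk hi n
  d_iff _ _ := (colimD_mk hi).symm
  map_comp _ _ h := (colimComp_mk hi h).symm
  map_inv _ := rfl

theorem isEtale_colimGroupoid (hi : ∀ n, (S n).IsOpenHom (S (n + 1)) (i n))
    (hS : ∀ n, (S n).IsEtale) : (colimGroupoid hi).IsEtale := by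
  rw [IsEtale, isLocalHomeomorph_iff_isLocalHomeomorphOn_univ]
  rintro ⟨n, a⟩ -
  have hmk := isOpenEmbedding_colimMk hi n
  have hcomp : (colimGroupoid hi).rng ∘ colimMk i n = colimMk i n ∘ (S n).rng :=
    funext fun a => ((isOpenHom_colimMk hi n).map_rng a).symm
  have h : IsLocalHomeomorph ((colimGroupoid hi).rng ∘ colimMk i n) :=
    hcomp ▸ hmk.isLocalHomeomorph.comp (hS n)
  exact h.isLocalHomeomorphOn (s := Set.univ) |>.of_comp_right
    hmk.isLocalHomeomorph.isLocalHomeomorphOn _ ⟨a, trivial, rfl⟩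

theorem exists_mapUnits_eq (hi : ∀ n, (S n).IsOpenHom (S (n + 1)) (i n))
    (x y : (colimGroupoid hi).unitSpace) :
    ∃ n u v, (isOpenHom_colimMk hi n).mapUnits u = x ∧
      (isOpenHom_colimMk hi n).mapUnits v = y := by
  obtain ⟨x, hx⟩ := x
  obtain ⟨y, hy⟩ := y
  obtain ⟨n, a, b, rfl, rfl⟩ := exists_colimMk_eq₂ x y
  have h := isOpenHom_colimMk hi n
  exact ⟨n, ⟨a, h.map_mem_unitSpace_iff.1 hx⟩, ⟨b, h.map_mem_unitSpace_iff.1 hy⟩, rfl, rfl⟩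

theorem t2Space_unitSpace_colimGroupoid (hi : ∀ n, (S n).IsOpenHom (S (n + 1)) (i n))
    (hT2 : ∀ n, T2Space (S n).unitSpace) : T2Space (colimGroupoid hi).unitSpace := by
  refine ⟨fun x y hxy => ?_⟩
  obtain ⟨n, u, v, rfl, rfl⟩ := exists_mapUnits_eq hi x y
  have he := (isOpenHom_colimMk hi n).isOpenEmbedding_mapUnits
  obtain ⟨U, V, hU, hV, hu, hv, hUV⟩ := t2_separation (ne_of_apply_ne _ hxy)
  exact ⟨_, _, he.isOpenMap U hU, he.isOpenMap V hV, ⟨u, hu, rfl⟩, ⟨v, hv, rfl⟩,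
    (Set.disjoint_image_iff he.injective).2 hUV⟩

theorem locallyCompactSpace_unitSpace_colimGroupoid
    (hi : ∀ n, (S n).IsOpenHom (S (n + 1)) (i n))
    (hLC : ∀ n, LocallyCompactSpace (S n).unitSpace) :
    LocallyCompactSpace (colimGroupoid hi).unitSpace := by
  refine ⟨fun x W hW => ?_⟩
  obtain ⟨n, u, _, rfl, -⟩ := exists_mapUnits_eq hi x x
  have he := (isOpenHom_colimMk hi n).isOpenEmbedding_mapUnits
  obtain ⟨K, hK, hKW, hKc⟩ := local_compact_nhds (he.continuous.continuousAt hW)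
  exact ⟨_, he.isOpenMap.image_mem_nhds hK, Set.image_subset_iff.2 hKW, hKc.image he.continuous⟩

end Colim

/-- Given injective open continuous groupoid homomorphisms
`i n : G n → G (n+1)` between étale groupoids with locally compact Hausdorff
unit spaces, the topological inductive limit with the pointwise-defined
operations is an étale groupoid with locally compact Hausdorff unit space,
and the canonical maps are injective open continuous groupoid homomorphisms. -/
theorem inductive_limit_groupoid {G : ℕ → Type*} [∀ n, TopologicalSpace (G n)]
    (S : ∀ n, TopGroupoid (G n)) (i : ∀ n, G n → G (n + 1))
    (hinj : ∀ n, Function.Injective (i n))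
    (hcont : ∀ n, Continuous (i n))
    (hopen : ∀ n, IsOpenMap (i n))
    (hD : ∀ n (a b : G n), (S n).D a b ↔ (S (n + 1)).D (i n a) (i n b))
    (hcomp : ∀ n (a b : G n), (S n).D a b →
      i n ((S n).comp a b) = (S (n + 1)).comp (i n a) (i n b))
    (hinv : ∀ n (a : G n), i n ((S n).inv a) = (S (n + 1)).inv (i n a))
    (hetale : ∀ n, (S n).IsEtale)
    (hT2 : ∀ n, T2Space ((S n).unitSpace))
    (hLC : ∀ n, LocallyCompactSpace ((S n).unitSpace)) :
    ∃ Q : TopGroupoid (Colim i),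
      -- the groupoid operations are defined pointwise
      (∀ n (a b : G n), (S n).D a b ↔ Q.D (colimMk i n a) (colimMk i n b)) ∧
      (∀ n (a b : G n), (S n).D a b →
        Q.comp (colimMk i n a) (colimMk i n b) = colimMk i n ((S n).comp a b)) ∧
      (∀ n (a : G n), Q.inv (colimMk i n a) = colimMk i n ((S n).inv a)) ∧
      -- the colimit is an étale groupoid with locally compact Hausdorff unit space
      Q.IsEtale ∧ T2Space Q.unitSpace ∧ LocallyCompactSpace Q.unitSpace ∧
      -- the canonical maps are injective open continuous (groupoid homomorphisms,
      -- by the pointwise compatibility above)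
      (∀ n, Function.Injective (colimMk i n)) ∧
      (∀ n, Continuous (colimMk i n)) ∧
      (∀ n, IsOpenMap (colimMk i n)) := by
  have hi : ∀ n, (S n).IsOpenHom (S (n + 1)) (i n) := fun n =>
    ⟨hinj n, hcont n, hopen n, hD n, hcomp n, hinv n⟩
  have hmk := isOpenHom_colimMk hi
  exact ⟨colimGroupoid hi, fun n => (hmk n).d_iff, fun n a b h => ((hmk n).map_comp a b h).symm,
    fun n a => ((hmk n).map_inv a).symm, isEtale_colimGroupoid hi hetale,
    t2Space_unitSpace_colimGroupoid hi hT2, locallyCompactSpace_unitSpace_colimGroupoid hi hLC,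
    fun n => (hmk n).injective, fun n => (hmk n).continuous, fun n => (hmk n).isOpenMap⟩
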